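/- Let n and k be integers with n ≥ k ≥ 4, and assume that n ≥ 5 or k ≥ 5. Let 𝓡_k be the family of all non-transitive tournaments on k vertices. Then D(n, 𝓡_k) = 2^{t_{k-1}(n)}, and the Turán graph T_{k-1}(n) is the unique n-vertex 𝓡_k-extremal graph; equivalently, the maximum number of orientations of an n-vertex graph in which every copy of K_k is transitively oriented equals 2^{t_{k-1}(n)}, attained only by T_{k-1}(n). -/

import Mathlib

open scoped Classical

noncomputable section

universe u

variable {V : Type u}

/-- An orientation of a simple graph `G`: a relation choosing exactly one
direction for each edge of `G`. -/
abbrev SimpleGraph.Orient (G : SimpleGraph V) : Type u :=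
  {D : V → V → Prop // (∀ u v, D u v → G.Adj u v) ∧ ∀ u v, G.Adj u v → (D u v ↔ ¬ D v u)}

/-- A family of tournaments: for each `k`, a set of orientations of the
complete graph on `k` vertices. -/
abbrev TournFamily : Type :=
  ∀ k : ℕ, Set ((⊤ : SimpleGraph (Fin k)).Orient)

/-- The orientation `D` of `G` contains a copy of the `k`-vertex tournament `T`. -/
def ContainsCopy {G : SimpleGraph V} (D : G.Orient) {k : ℕ}
    (T : (⊤ : SimpleGraph (Fin k)).Orient) : Prop :=
  ∃ φ : Fin k → V, Function.Injective φ ∧ ∀ i j, T.1 i j → D.1 (φ i) (φ j)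

/-- The orientation `D` is `F`-free: it contains no copy of a member of `F`. -/
def FreeOrient {G : SimpleGraph V} (F : TournFamily) (D : G.Orient) : Prop :=
  ∀ (k : ℕ) (T : (⊤ : SimpleGraph (Fin k)).Orient), T ∈ F k → ¬ ContainsCopy D T

/-- `D(G, F)`: the number of `F`-free orientations of the graph `G`. -/
def numOrient (G : SimpleGraph V) (F : TournFamily) : ℕ :=
  Nat.card {D : G.Orient // FreeOrient F D}

/-- `D(n, F)`: the maximum of `D(G, F)` over all `n`-vertex graphs `G`. -/
def maxOrient (n : ℕ) (F : TournFamily) : ℕ :=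
  sSup (Set.range fun G : SimpleGraph (Fin n) => numOrient G F)

/-- A tournament is strongly connected if there is a directed path between
every ordered pair of vertices. -/
def IsStrongTourn {k : ℕ} (T : (⊤ : SimpleGraph (Fin k)).Orient) : Prop :=
  ∀ u v : Fin k, Relation.ReflTransGen T.1 u v

/-- `𝓢 k`: the family of strongly connected tournaments on `k` vertices. -/
def SFam (k : ℕ) : TournFamily := fun m => {T | m = k ∧ IsStrongTourn T}

/-- `t r n`: the number of edges of the `r`-partite Turán graph on `n` vertices. -/
def turanNum (r n : ℕ) : ℕ := (SimpleGraph.turanGraph n r).edgeFinset.card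

/-- `𝓡 k`: the family of non-transitive tournaments on `k` vertices. -/
def RFam (k : ℕ) : TournFamily := fun m => {T | m = k ∧ ¬ Transitive T.1}

/-!
If `G` has no `k`-clique, all of its `2 ^ e(G)` orientations are `𝓡 k`-free and Turán's theorem
applies. Otherwise fix a `k`-clique `W`; it remains to see that `G` has strictly fewer than
`2 ^ t_{k-1}(n)` free orientations, which goes by induction on `n`, deleting `W`. A free orientation
orders `W` linearly, in one of `k!` ways. Once this order is fixed, a vertex `v` can be attached to
`W` in at most `max (2 ^ (k - 2)) (k + 1)` ways: this is clear if `v` has at most `k - 2` neighbours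
in `W`, and otherwise any two neighbours of `v` in `W` lie in a `k`-clique of `W ∪ {v}` through `v`,
whose transitivity makes the possible in-neighbourhoods of `v` in `W` a chain under inclusion.
Finally `k! * max (2 ^ (k - 2)) (k + 1) ^ m < 2 ^ (t_{k-1}(m + k) - t_{k-1}(m))` for `k ≥ 4`.
-/

open SimpleGraph Finset

open scoped Nat

/-! ### Orientations -/

section Orientations

variable {G : SimpleGraph V}

theorem orient_asymm (D : G.Orient) {u v : V} (h : D.1 u v) : ¬ D.1 v u :=
  (D.2.2 u v (D.2.1 u v h)).1 h

theorem orient_irrefl (D : G.Orient) (v : V) : ¬ D.1 v v :=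
  fun h => orient_asymm D h h

theorem orient_total (D : G.Orient) {u v : V} (h : G.Adj u v) : D.1 u v ∨ D.1 v u := by
  rw [D.2.2 u v h]
  exact (em _).symm

/-- The orientation of `G` in which the edges of `S` point upwards and all others downwards, for a
given linear order of the vertices. -/
def orientOfUpEdges [LinearOrder V] (S : Set G.edgeSet) : G.Orient :=
  ⟨fun u v => ∃ h : G.Adj u v, ⟨s(u, v), h⟩ ∈ S ↔ u < v, fun _ _ h => h.1, fun u v h => by
    have hswap : (⟨s(v, u), h.symm⟩ : G.edgeSet) = ⟨s(u, v), h⟩ := Subtype.ext Sym2.eq_swap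
    simp only [h, h.symm, exists_true_left, hswap, lt_iff_not_ge (a := v), h.ne.le_iff_lt]
    tauto⟩

/-- Relative to a linear order of the vertices, an orientation amounts to the set of edges that it
directs upwards. -/
def orientEquivUpEdges [LinearOrder V] (G : SimpleGraph V) : G.Orient ≃ Set G.edgeSet where
  toFun D := {e | D.1 e.1.inf e.1.sup}
  invFun := orientOfUpEdges
  left_inv D := by
    ext u v
    by_cases h : G.Adj u v
    · rcases h.ne.lt_or_gt with hlt | hlt
      · simp [orientOfUpEdges, h, hlt, hlt.le]
      · simp [orientOfUpEdges, h, hlt.le, hlt.not_gt, D.2.2 u v h]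
    · exact iff_of_false (fun h' => h h'.1) (fun h' => h (D.2.1 u v h'))
  right_inv S := by
    ext ⟨e, he⟩
    induction e with
    | _ u v =>
      have h : G.Adj u v := he
      have hswap : (⟨s(v, u), h.symm⟩ : G.edgeSet) = ⟨s(u, v), h⟩ := Subtype.ext Sym2.eq_swap
      rcases h.ne.lt_or_gt with hlt | hlt <;>
        simp [orientOfUpEdges, h, h.symm, hlt, hlt.le, hswap]

theorem card_orient [Fintype V] (G : SimpleGraph V) : Nat.card G.Orient = 2 ^ #G.edgeFinset := by
  let : LinearOrder V := LinearOrder.lift' (Fintype.equivFin V) (Fintype.equivFin V).injective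
  rw [Nat.card_congr (orientEquivUpEdges G), Nat.card_eq_fintype_card, Fintype.card_set,
    edgeFinset_card]

/-- The restriction of an orientation to an induced subgraph. -/
def restrictOrient (D : G.Orient) (s : Set V) : (G.induce s).Orient :=
  ⟨fun u v => D.1 u v, fun _ _ h => D.2.1 _ _ h, fun _ _ h => D.2.2 _ _ h⟩

theorem FreeOrient.restrictOrient {F : TournFamily} {D : G.Orient} (hD : FreeOrient F D)
    (s : Set V) : FreeOrient F (restrictOrient D s) := by
  rintro m T hT ⟨f, hf, h⟩
  exact hD m T hT ⟨fun i => f i, Subtype.val_injective.comp hf, h⟩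

/-- Two orientations agree on `W` if they direct every edge inside `W` in the same way. -/
def AgreeOn (D D' : G.Orient) (W : Finset V) : Prop :=
  ∀ a ∈ W, ∀ b ∈ W, D.1 a b ↔ D'.1 a b

theorem AgreeOn.symm {D D' : G.Orient} {W : Finset V} (h : AgreeOn D D' W) : AgreeOn D' D W :=
  fun a ha b hb => (h a ha b hb).symm

theorem AgreeOn.trans {D D' D'' : G.Orient} {W : Finset V} (h : AgreeOn D D' W)
    (h' : AgreeOn D' D'' W) : AgreeOn D D'' W :=
  fun a ha b hb => (h a ha b hb).trans (h' a ha b hb)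

/-- The in-neighbours of `v` that lie in `W`. -/
def inNeighborsIn (D : G.Orient) (W : Finset V) (v : V) : Finset V :=
  {u ∈ W | D.1 u v}

@[simp]
theorem mem_inNeighborsIn {D : G.Orient} {W : Finset V} {u v : V} :
    u ∈ inNeighborsIn D W v ↔ u ∈ W ∧ D.1 u v :=
  mem_filter

theorem orient_eq_of_agreeOn {D D' : G.Orient} {W : Finset V} (hW : AgreeOn D D' W)
    (hin : ∀ v ∉ W, inNeighborsIn D W v = inNeighborsIn D' W v)
    (hcompl : restrictOrient D (↑W)ᶜ = restrictOrient D' (↑W)ᶜ) : D = D' := by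
  have hcross : ∀ a ∈ W, ∀ b ∉ W, D.1 a b ↔ D'.1 a b := fun a ha b hb => by
    simpa [ha] using congrArg (a ∈ ·) (hin b hb)
  ext a b
  by_cases hab : G.Adj a b
  swap
  · exact iff_of_false (fun h => hab (D.2.1 _ _ h)) (fun h => hab (D'.2.1 _ _ h))
  by_cases ha : a ∈ W <;> by_cases hb : b ∈ W
  · exact hW a ha b hb
  · exact hcross a ha b hb
  · rw [D.2.2 a b hab, D'.2.2 a b hab, hcross b hb a ha]
  · exact iff_of_eq (congrArg (fun E : (G.induce (↑W)ᶜ).Orient => E.1 ⟨a, ha⟩ ⟨b, hb⟩) hcompl)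

theorem numOrient_eq_card_filter (G : SimpleGraph V) [Fintype G.Orient] (F : TournFamily) :
    numOrient G F = #{D : G.Orient | FreeOrient F D} := by
  rw [numOrient, Nat.card_eq_fintype_card, Fintype.card_subtype]

end Orientations

/-! ### Free orientations extending a given orientation of a vertex set -/

section FreeExtensions

variable [Fintype V] {G : SimpleGraph V}

/-- The `F`-free orientations of `G` that agree with `D₀` on `W`. -/
def freeExtensions (F : TournFamily) (D₀ : G.Orient) (W : Finset V) : Finset G.Orient :=
  {D | FreeOrient F D ∧ AgreeOn D D₀ W}

@[simp]
theorem mem_freeExtensions {F : TournFamily} {D D₀ : G.Orient} {W : Finset V} :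
    D ∈ freeExtensions F D₀ W ↔ FreeOrient F D ∧ AgreeOn D D₀ W := by
  simp [freeExtensions]

/-- The ways to attach `v` to `W`, each recorded by its set of in-neighbours of `v`, that occur in
an `F`-free orientation agreeing with `D₀` on `W`. -/
def attachments (F : TournFamily) (D₀ : G.Orient) (W : Finset V) (v : V) : Finset (Finset V) :=
  (freeExtensions F D₀ W).image fun D => inNeighborsIn D W v

theorem card_freeExtensions_le (F : TournFamily) (D₀ : G.Orient) (W : Finset V) :
    #(freeExtensions F D₀ W) ≤
      (∏ v ∈ Wᶜ, #(attachments F D₀ W v)) * numOrient (G.induce (↑W)ᶜ) F := by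
  let parts (D : G.Orient) : ((v : V) → v ∈ Wᶜ → Finset V) × (G.induce (↑W)ᶜ).Orient :=
    (fun v _ => inNeighborsIn D W v, restrictOrient D (↑W)ᶜ)
  let targets : Finset (((v : V) → v ∈ Wᶜ → Finset V) × (G.induce (↑W)ᶜ).Orient) :=
    Wᶜ.pi (attachments F D₀ W) ×ˢ ({E | FreeOrient F E} : Finset (G.induce (↑W)ᶜ).Orient)
  have hmaps : ∀ D ∈ freeExtensions F D₀ W, parts D ∈ targets := fun D hD => by
    simp only [parts, targets, mem_product, mem_pi, mem_filter_univ]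
    exact ⟨fun v _ => mem_image_of_mem (fun D => inNeighborsIn D W v) hD,
      (mem_freeExtensions.1 hD).1.restrictOrient _⟩
  have hinj : Set.InjOn parts (freeExtensions F D₀ W) := fun D hD D' hD' h => by
    rw [mem_coe, mem_freeExtensions] at hD hD'
    obtain ⟨hin, hcompl⟩ := Prod.ext_iff.1 h
    exact orient_eq_of_agreeOn (hD.2.trans hD'.2.symm)
      (fun v hv => congrFun (congrFun hin v) (mem_compl.2 hv)) hcompl
  have hcard := card_le_card_of_injOn parts hmaps hinj
  rwa [card_product, card_pi, ← numOrient_eq_card_filter] at hcard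

end FreeExtensions

/-! ### Transitively oriented cliques -/

section TransOn

variable {G : SimpleGraph V} {D D' : G.Orient} {W : Finset V}

/-- The orientation `D` is transitive on the vertex set `W`. -/
def TransOn (D : G.Orient) (W : Finset V) : Prop :=
  ∀ ⦃a⦄, a ∈ W → ∀ ⦃b⦄, b ∈ W → ∀ ⦃c⦄, c ∈ W → D.1 a b → D.1 b c → D.1 a c

theorem TransOn.card_inNeighborsIn_lt (hD : TransOn D W) {u v : V} (hu : u ∈ W) (hv : v ∈ W)
    (h : D.1 u v) : #(inNeighborsIn D W u) < #(inNeighborsIn D W v) := by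
  refine card_lt_card ((ssubset_iff_of_subset fun w hw => ?_).2 ⟨u, ?_, ?_⟩)
  · rw [mem_inNeighborsIn] at hw ⊢
    exact ⟨hw.1, hD hw.1 hu hv hw.2 h⟩
  · exact mem_inNeighborsIn.2 ⟨hu, h⟩
  · exact fun hmem => orient_irrefl D u (mem_inNeighborsIn.1 hmem).2

theorem TransOn.card_inNeighborsIn_lt_iff (hD : TransOn D W) (hW : G.IsClique W) {u v : V}
    (hu : u ∈ W) (hv : v ∈ W) :
    #(inNeighborsIn D W u) < #(inNeighborsIn D W v) ↔ D.1 u v := by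
  refine ⟨fun h => ?_, hD.card_inNeighborsIn_lt hu hv⟩
  have huv : u ≠ v := by
    rintro rfl
    exact lt_irrefl _ h
  exact (orient_total D (hW hu hv huv)).resolve_right
    fun hvu => lt_asymm h (hD.card_inNeighborsIn_lt hv hu hvu)

/-- The position of each vertex of a clique `W` in the linear order given by an orientation that is
transitive on `W`. -/
def TransOn.rank (hD : TransOn D W) (hW : G.IsClique W) : W ↪ Fin #W where
  toFun w := ⟨#(inNeighborsIn D W w),
    card_lt_card (filter_ssubset.2 ⟨w, w.2, orient_irrefl D w⟩)⟩
  inj' u v huv := by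
    have heq : #(inNeighborsIn D W u) = #(inNeighborsIn D W v) := congrArg Fin.val huv
    by_contra hne
    rcases orient_total D (hW u.2 v.2 (Subtype.coe_ne_coe.2 hne)) with h | h
    · exact (hD.card_inNeighborsIn_lt u.2 v.2 h).ne heq
    · exact (hD.card_inNeighborsIn_lt v.2 u.2 h).ne' heq

theorem TransOn.agreeOn_of_rank_eq (hD : TransOn D W) (hD' : TransOn D' W) (hW : G.IsClique W)
    (h : hD.rank hW = hD'.rank hW) : AgreeOn D D' W := by
  have hcard : ∀ w ∈ W, #(inNeighborsIn D W w) = #(inNeighborsIn D' W w) := fun w hw =>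
    congrArg (fun e : W ↪ Fin #W => (e ⟨w, hw⟩).val) h
  intro a ha b hb
  rw [← hD.card_inNeighborsIn_lt_iff hW ha hb, ← hD'.card_inNeighborsIn_lt_iff hW ha hb,
    hcard a ha, hcard b hb]

end TransOn

section RFam

variable {G : SimpleGraph V} {k : ℕ} {D D' : G.Orient} {W : Finset V}

theorem FreeOrient.transOn (hD : FreeOrient (RFam k) D) (hW : G.IsNClique k W) :
    TransOn D W := by
  let e : Fin k ≃ W := (W.equivFinOfCardEq hW.card_eq).symm
  have hadj {i j : Fin k} (hij : i ≠ j) : G.Adj (e i) (e j) :=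
    hW.isClique (e i).2 (e j).2 (Subtype.coe_ne_coe.2 (e.injective.ne hij))
  have hne {i j : Fin k} (hij : D.1 (e i) (e j)) : i ≠ j := by
    rintro rfl
    exact orient_irrefl D _ hij
  let T : (⊤ : SimpleGraph (Fin k)).Orient :=
    ⟨fun i j => D.1 (e i) (e j), fun _ _ => hne, fun _ _ hij => D.2.2 _ _ (hadj hij)⟩
  intro a ha b hb c hc hab hbc
  by_contra hac
  refine hD k T ⟨rfl, fun hT => hac ?_⟩
    ⟨fun i => e i, Subtype.val_injective.comp e.injective, fun _ _ h => h⟩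
  simpa [T, hab, hbc] using @hT (e.symm ⟨a, ha⟩) (e.symm ⟨b, hb⟩) (e.symm ⟨c, hc⟩)

theorem freeOrient_RFam_of_cliqueFree (hG : G.CliqueFree k) (D : G.Orient) :
    FreeOrient (RFam k) D := by
  rintro _ T ⟨rfl, -⟩ ⟨f, hf, hT⟩
  refine (cliqueFree_iff.1 hG).elim' ⟨⟨f, fun {i j} h => ?_⟩, hf⟩
  rcases orient_total T h with hij | hji
  · exact D.2.1 _ _ (hT i j hij)
  · exact (D.2.1 _ _ (hT j i hji)).symm

theorem numOrient_RFam_of_cliqueFree [Fintype V] (hG : G.CliqueFree k) :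
    numOrient G (RFam k) = 2 ^ #G.edgeFinset := by
  rw [← card_orient, numOrient]
  exact Nat.card_congr (Equiv.subtypeUnivEquiv (freeOrient_RFam_of_cliqueFree hG))

theorem numOrient_RFam_le_factorial_mul [Fintype V] (hW : G.IsNClique k W) {m : ℕ}
    (hm : ∀ D₀ : G.Orient, #(freeExtensions (RFam k) D₀ W) ≤ m) :
    numOrient G (RFam k) ≤ k ! * m := by
  let rank (D : {D : G.Orient // FreeOrient (RFam k) D}) : W ↪ Fin #W :=
    (D.2.transOn hW).rank hW.isClique
  have hfiber (e : W ↪ Fin #W) : #{D | rank D = e} ≤ m := by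
    obtain h | ⟨D₀, hD₀⟩ := eq_empty_or_nonempty {D | rank D = e}
    · simp [h]
    · refine (card_le_card_of_injOn Subtype.val (fun D hD => ?_)
        Subtype.val_injective.injOn).trans (hm D₀.1)
      have hrank : rank D = rank D₀ := (mem_filter.1 hD).2.trans (mem_filter.1 hD₀).2.symm
      exact mem_coe.2 <| mem_freeExtensions.2 ⟨D.2,
        (D.2.transOn hW).agreeOn_of_rank_eq (D₀.2.transOn hW) hW.isClique hrank⟩
  calc numOrient G (RFam k) = #(univ : Finset {D : G.Orient // FreeOrient (RFam k) D}) :=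
        Nat.card_eq_fintype_card
    _ ≤ m * #(univ : Finset (W ↪ Fin #W)) :=
        card_le_mul_card_image_of_maps_to (fun D _ => mem_univ (rank D)) m fun e _ => hfiber e
    _ = k ! * m := by
        rw [card_univ, Fintype.card_embedding_eq, Fintype.card_fin, Fintype.card_coe, hW.card_eq,
          Nat.descFactorial_self, mul_comm]

theorem FreeOrient.trans_of_adj (hk : 3 ≤ k) (hD : FreeOrient (RFam k) D) (hW : G.IsClique W)
    {v : V} (hv : k - 1 ≤ #{w ∈ W | G.Adj v w}) {a b : V} (ha : a ∈ W) (hb : b ∈ W)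
    (hva : G.Adj v a) (hvb : G.Adj v b) (hab : D.1 a b) (hbv : D.1 b v) : D.1 a v := by
  have hpair : {a, b} ⊆ {w ∈ W | G.Adj v w} := by
    simp [insert_subset_iff, ha, hb, hva, hvb]
  obtain ⟨S, hS, hSW, hcard⟩ := exists_subsuperset_card_eq hpair (card_le_two.trans (by omega)) hv
  have hclique : G.IsNClique (k - 1 + 1) (insert v S) :=
    .insert ⟨hW.subset fun w hw => (mem_filter.1 (hSW hw)).1, hcard⟩
      fun w hw => (mem_filter.1 (hSW hw)).2
  rw [Nat.sub_add_cancel (by omega)] at hclique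
  exact hD.transOn hclique (mem_insert_of_mem (hS (by simp))) (mem_insert_of_mem (hS (by simp)))
    (mem_insert_self v S) hab hbv

theorem FreeOrient.inNeighborsIn_subset_or_subset (hk : 3 ≤ k) (hD : FreeOrient (RFam k) D)
    (hD' : FreeOrient (RFam k) D') (hW : G.IsClique W) {v : V}
    (hv : k - 1 ≤ #{w ∈ W | G.Adj v w}) (hagree : AgreeOn D D' W) :
    inNeighborsIn D W v ⊆ inNeighborsIn D' W v ∨ inNeighborsIn D' W v ⊆ inNeighborsIn D W v := by
  by_contra! h
  obtain ⟨⟨a, ha, ha'⟩, ⟨b, hb, hb'⟩⟩ := And.imp not_subset.1 not_subset.1 h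
  simp only [mem_inNeighborsIn, not_and] at ha ha' hb hb'
  have hva : G.Adj v a := (D.2.1 _ _ ha.2).symm
  have hvb : G.Adj v b := (D'.2.1 _ _ hb.2).symm
  have hab : a ≠ b := by
    rintro rfl
    exact ha' ha.1 hb.2
  rcases orient_total D (hW ha.1 hb.1 hab) with h | h
  · exact ha' ha.1 (hD'.trans_of_adj hk hW hv ha.1 hb.1 hva hvb
      ((hagree a ha.1 b hb.1).1 h) hb.2)
  · exact hb' hb.1 (hD.trans_of_adj hk hW hv hb.1 ha.1 hvb hva h ha.2)

end RFam

/-! ### Attaching a vertex to a clique -/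

section Attachments

variable [Fintype V] {G : SimpleGraph V} {k : ℕ} {W : Finset V}

theorem attachments_subset_powerset (F : TournFamily) (D₀ : G.Orient) (W : Finset V) (v : V) :
    attachments F D₀ W v ⊆ powerset {w ∈ W | G.Adj v w} := by
  simp only [attachments, image_subset_iff, mem_powerset]
  exact fun D _ => monotone_filter_right _ fun w _ h => (D.2.1 w v h).symm

theorem isChain_attachments (hk : 3 ≤ k) (hW : G.IsClique W) (D₀ : G.Orient) {v : V}
    (hv : k - 1 ≤ #{w ∈ W | G.Adj v w}) :
    IsChain (· ⊆ ·) (attachments (RFam k) D₀ W v : Set (Finset V)) := by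
  simp only [attachments, freeExtensions, coe_image, coe_filter, mem_univ, true_and]
  rintro _ ⟨D, ⟨hD, hagree⟩, rfl⟩ _ ⟨D', ⟨hD', hagree'⟩, rfl⟩ -
  exact hD.inNeighborsIn_subset_or_subset hk hD' hW hv (hagree.trans hagree'.symm)

theorem card_le_succ_of_isChain_powerset {α : Type*} {A : Finset (Finset α)} {s : Finset α}
    (hA : A ⊆ s.powerset) (hchain : IsChain (· ⊆ ·) (A : Set (Finset α))) : #A ≤ #s + 1 := by
  rw [← card_range (#s + 1)]
  refine card_le_card_of_injOn card (fun t ht => ?_) fun t ht t' ht' h => ?_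
  · exact mem_coe.2 (mem_range_succ_iff.2 (card_le_card (mem_powerset.1 (hA ht))))
  · rcases hchain.total ht ht' with hsub | hsub
    · exact eq_of_subset_of_card_le hsub h.ge
    · exact (eq_of_subset_of_card_le hsub h.le).symm

/-- Bounds the number of ways to attach a vertex to an ordered `k`-clique in an `𝓡 k`-free
orientation: the two terms stand for vertices with at most, or more than, `k - 2` neighbours in the
clique. Meant for `2 ≤ k`, the subtraction being truncated. -/
def attachBound (k : ℕ) : ℕ := max (2 ^ (k - 2)) (k + 1)

theorem card_attachments_le (hk : 3 ≤ k) (hW : G.IsNClique k W) (D₀ : G.Orient) (v : V) :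
    #(attachments (RFam k) D₀ W v) ≤ attachBound k := by
  have hsub := attachments_subset_powerset (RFam k) D₀ W v
  by_cases hv : k - 1 ≤ #{w ∈ W | G.Adj v w}
  · refine le_max_of_le_right ?_
    exact (card_le_succ_of_isChain_powerset (hsub.trans (powerset_mono.2 (filter_subset _ _)))
      (isChain_attachments hk hW.isClique D₀ hv)).trans_eq (by rw [hW.card_eq])
  · refine le_max_of_le_left ((card_le_card hsub).trans ?_)
    rw [card_powerset]
    exact Nat.pow_le_pow_right two_pos (by omega)

theorem numOrient_RFam_le_of_isNClique (hk : 3 ≤ k) (hW : G.IsNClique k W) :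
    numOrient G (RFam k) ≤ k ! *
      (attachBound k ^ (Fintype.card V - k) * numOrient (G.induce (↑W)ᶜ) (RFam k)) := by
  refine numOrient_RFam_le_factorial_mul hW fun D₀ => (card_freeExtensions_le _ D₀ W).trans ?_
  gcongr
  rw [show Fintype.card V - k = #Wᶜ by rw [card_compl, hW.card_eq]]
  exact prod_le_pow_card _ _ _ fun v _ => card_attachments_le hk hW D₀ v

end Attachments

/-! ### Turán numbers -/

theorem turanNum_add (r n : ℕ) :
    turanNum r (n + r) = turanNum r n + n * (r - 1) + r.choose 2 := by
  unfold turanNum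
  convert card_edgeFinset_turanGraph_add (n := n) (r := r)

theorem turanNum_of_le {r n : ℕ} (h : n ≤ r) : turanNum r n = n.choose 2 := by
  have htop : turanGraph n r = ⊤ := turanGraph_eq_top.2 (.inr h)
  have hcard := card_edgeFinset_top_eq_card_choose_two (V := Fin n)
  rw [Fintype.card_fin] at hcard
  unfold turanNum
  convert hcard

theorem turanNum_succ {r : ℕ} (hr : 0 < r) (n : ℕ) :
    turanNum r (n + 1) = turanNum r n + (n - n / r) := by
  induction n using Nat.strong_induction_on with
  | _ n ih =>
    rcases lt_or_ge n r with hn | hn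
    · rw [turanNum_of_le hn, turanNum_of_le hn.le, Nat.div_eq_of_lt hn, Nat.choose_succ_succ',
        Nat.choose_one_right, Nat.sub_zero, add_comm]
    · obtain ⟨m, rfl⟩ := Nat.exists_eq_add_of_le' hn
      have hdiv : m / r ≤ m := Nat.div_le_self m r
      rw [add_right_comm, turanNum_add, turanNum_add, ih m (by omega), Nat.add_div_right m hr,
        add_one_mul]
      omega

theorem turanNum_add_succ {r : ℕ} (hr : 0 < r) (m : ℕ) :
    turanNum r (m + (r + 1)) + 1 =
      turanNum r m + ((r - 1) * m + (m - m / r)) + (r + 1).choose 2 := by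
  have hchoose : (r + 1).choose 2 = r + r.choose 2 := by
    rw [Nat.choose_succ_succ', Nat.choose_one_right]
  rw [show m + (r + 1) = m + 1 + r by ring, turanNum_add, turanNum_succ hr, add_one_mul, hchoose,
    mul_comm m]
  omega

theorem two_mul_factorial_lt_two_pow_choose {k : ℕ} (hk : 4 ≤ k) : 2 * k ! < 2 ^ k.choose 2 := by
  induction k, hk using Nat.le_induction with
  | base => decide
  | succ k _ ih =>
    calc 2 * (k + 1)! = (k + 1) * (2 * k !) := by rw [Nat.factorial_succ]; ring
      _ < (k + 1) * 2 ^ k.choose 2 := by gcongr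
      _ ≤ 2 ^ k * 2 ^ k.choose 2 := by gcongr; exact Nat.lt_two_pow_self
      _ = 2 ^ (k + 1).choose 2 := by
        rw [← pow_add, Nat.choose_succ_succ', Nat.choose_one_right]

theorem attachBound_of_five_le {k : ℕ} (hk : 5 ≤ k) : attachBound k = 2 ^ (k - 2) := by
  obtain ⟨j, rfl⟩ := Nat.exists_eq_add_of_le' hk
  have hj : j < 2 ^ j := Nat.lt_two_pow_self
  refine max_eq_left ?_
  rw [show j + 5 - 2 = j + 3 by omega, pow_add]
  omega

theorem five_pow_le_two_pow (m : ℕ) : 5 ^ m ≤ 2 ^ (2 * m + (m - m / 3)) := by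
  induction m using Nat.strong_induction_on with
  | _ m ih =>
    match m with
    | 0 | 1 | 2 => norm_num
    | m + 3 =>
      calc 5 ^ (m + 3) = 5 ^ m * 125 := by ring
        _ ≤ 2 ^ (2 * m + (m - m / 3)) * 2 ^ 8 := by
          exact Nat.mul_le_mul (ih m (by omega)) (by norm_num)
        _ = 2 ^ (2 * (m + 3) + (m + 3 - (m + 3) / 3)) := by
          rw [← pow_add]
          congr 1
          omega

theorem attachBound_pow_le {k : ℕ} (hk : 4 ≤ k) (m : ℕ) :
    attachBound k ^ m ≤ 2 ^ ((k - 2) * m + (m - m / (k - 1))) := by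
  rcases hk.eq_or_lt with rfl | hk
  · exact five_pow_le_two_pow m
  · rw [attachBound_of_five_le hk, ← pow_mul]
    exact Nat.pow_le_pow_right two_pos (Nat.le_add_right _ _)

theorem factorial_mul_attachBound_pow_lt {k : ℕ} (hk : 4 ≤ k) (m : ℕ) :
    k ! * (attachBound k ^ m * 2 ^ turanNum (k - 1) m) < 2 ^ turanNum (k - 1) (m + k) := by
  have hturan : turanNum (k - 1) (m + k) + 1 =
      turanNum (k - 1) m + ((k - 2) * m + (m - m / (k - 1))) + k.choose 2 := by
    simpa [Nat.sub_add_cancel (show 1 ≤ k by omega), Nat.sub_sub] using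
      turanNum_add_succ (show 0 < k - 1 by omega) m
  refine lt_of_mul_lt_mul_left (a := 2) ?_ (Nat.zero_le 2)
  calc 2 * (k ! * (attachBound k ^ m * 2 ^ turanNum (k - 1) m))
      = (2 * k !) * (attachBound k ^ m * 2 ^ turanNum (k - 1) m) := by ring
    _ < 2 ^ k.choose 2 *
          (2 ^ ((k - 2) * m + (m - m / (k - 1))) * 2 ^ turanNum (k - 1) m) := by
        refine Nat.mul_lt_mul_of_lt_of_le (two_mul_factorial_lt_two_pow_choose hk) ?_
          (by positivity)
        exact Nat.mul_le_mul_right _ (attachBound_pow_le hk m)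
    _ = 2 * 2 ^ turanNum (k - 1) (m + k) := by
        rw [← pow_add, ← pow_add, ← pow_succ', hturan]
        ring

theorem extremalNumber_top_eq_turanNum {k : ℕ} (hk : 2 ≤ k) (n : ℕ) :
    extremalNumber n (⊤ : SimpleGraph (Fin k)) = turanNum (k - 1) n := by
  have : Nontrivial (Fin k) := Fin.nontrivial_iff_two_le.2 hk
  rw [extremalNumber_top, turanNum, Fintype.card_fin]

/-! ### The upper bound -/

section UpperBound

variable [Fintype V] {k : ℕ}

theorem card_coe_compl (W : Finset V) : Fintype.card ↥(W : Set V)ᶜ = Fintype.card V - #W := by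
  rw [Fintype.card_compl_set, ← Set.toFinset_card, toFinset_coe]

theorem card_edgeFinset_le_turanNum (hk : 2 ≤ k) {G : SimpleGraph V} (hG : G.CliqueFree k) :
    #G.edgeFinset ≤ turanNum (k - 1) (Fintype.card V) := by
  rw [← extremalNumber_top_eq_turanNum hk]
  exact card_edgeFinset_le_extremalNumber (cliqueFree_iff_top_free.1 (by simpa using hG))

theorem cliqueFree_and_card_edgeFinset_eq_iff (hk : 2 ≤ k) (G : SimpleGraph V) :
    G.CliqueFree k ∧ #G.edgeFinset = turanNum (k - 1) (Fintype.card V) ↔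
      Nonempty (G ≃g turanGraph (Fintype.card V) (k - 1)) := by
  have : Nontrivial (Fin k) := Fin.nontrivial_iff_two_le.2 hk
  simpa only [← cliqueFree_iff_top_free, Fintype.card_fin, extremalNumber_top_eq_turanNum hk] using
    card_edgeFinset_eq_extremalNumber_top_iff_nonempty_iso_turanGraph (G := G) (α := Fin k)

theorem numOrient_RFam_lt_of_isNClique (hk : 4 ≤ k) {G : SimpleGraph V} {W : Finset V}
    (hW : G.IsNClique k W) (hcompl : numOrient (G.induce (↑W)ᶜ) (RFam k) ≤
      2 ^ turanNum (k - 1) (Fintype.card V - k)) :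
    numOrient G (RFam k) < 2 ^ turanNum (k - 1) (Fintype.card V) := by
  have hkV : k ≤ Fintype.card V := hW.card_eq ▸ card_le_univ W
  calc numOrient G (RFam k)
      ≤ k ! * (attachBound k ^ (Fintype.card V - k) * numOrient (G.induce (↑W)ᶜ) (RFam k)) :=
        numOrient_RFam_le_of_isNClique (by omega) hW
    _ ≤ k ! * (attachBound k ^ (Fintype.card V - k) *
          2 ^ turanNum (k - 1) (Fintype.card V - k)) := by gcongr
    _ < 2 ^ turanNum (k - 1) (Fintype.card V - k + k) := factorial_mul_attachBound_pow_lt hk _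
    _ = 2 ^ turanNum (k - 1) (Fintype.card V) := by rw [Nat.sub_add_cancel hkV]

theorem numOrient_RFam_le (hk : 4 ≤ k) (G : SimpleGraph V) :
    numOrient G (RFam k) ≤ 2 ^ turanNum (k - 1) (Fintype.card V) := by
  induction hn : Fintype.card V using Nat.strong_induction_on generalizing V with
  | _ n ih =>
    subst hn
    by_cases hG : G.CliqueFree k
    · rw [numOrient_RFam_of_cliqueFree hG]
      exact Nat.pow_le_pow_right two_pos (card_edgeFinset_le_turanNum (by omega) hG)
    · obtain ⟨W, hW⟩ : ∃ W, G.IsNClique k W := by simpa [CliqueFree] using hG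
      have hkV : k ≤ Fintype.card V := hW.card_eq ▸ card_le_univ W
      have hcard : Fintype.card ↥(W : Set V)ᶜ = Fintype.card V - k := hW.card_eq ▸ card_coe_compl W
      exact (numOrient_RFam_lt_of_isNClique hk hW (ih _ (by omega) _ hcard)).le

theorem numOrient_RFam_eq_iff (hk : 4 ≤ k) (G : SimpleGraph V) :
    numOrient G (RFam k) = 2 ^ turanNum (k - 1) (Fintype.card V) ↔
      Nonempty (G ≃g turanGraph (Fintype.card V) (k - 1)) := by
  rw [← cliqueFree_and_card_edgeFinset_eq_iff (by omega)]
  refine ⟨fun h => ?_, fun ⟨hG, hcard⟩ => by rw [numOrient_RFam_of_cliqueFree hG, hcard]⟩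
  have hG : G.CliqueFree k := fun W hW => by
    have hcard : Fintype.card ↥(W : Set V)ᶜ = Fintype.card V - k := hW.card_eq ▸ card_coe_compl W
    exact (numOrient_RFam_lt_of_isNClique hk hW (hcard ▸ numOrient_RFam_le hk _)).ne h
  rw [numOrient_RFam_of_cliqueFree hG] at h
  exact ⟨hG, Nat.pow_right_injective le_rfl h⟩

end UpperBound

theorem max_RFam_free_orientations_general (n k : ℕ) (hk : 4 ≤ k) :
    maxOrient n (RFam k) = 2 ^ turanNum (k - 1) n ∧
    ∀ G : SimpleGraph (Fin n), numOrient G (RFam k) = 2 ^ turanNum (k - 1) n ↔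
      Nonempty (G ≃g turanGraph n (k - 1)) := by
  have hle (G : SimpleGraph (Fin n)) : numOrient G (RFam k) ≤ 2 ^ turanNum (k - 1) n := by
    simpa using numOrient_RFam_le hk G
  have heq (G : SimpleGraph (Fin n)) : numOrient G (RFam k) = 2 ^ turanNum (k - 1) n ↔
      Nonempty (G ≃g turanGraph n (k - 1)) := by
    have h := numOrient_RFam_eq_iff hk G
    rwa [Fintype.card_fin] at h
  refine ⟨IsGreatest.csSup_eq ⟨⟨turanGraph n (k - 1), (heq _).2 ⟨Iso.refl⟩⟩, ?_⟩, heq⟩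
  rintro _ ⟨G, rfl⟩
  exact hle G

/-- For `n ≥ k ≥ 4` with `n ≥ 5` or `k ≥ 5`, the maximum number of orientations
of an `n`-vertex graph in which every copy of `K_k` is transitively oriented is
`2 ^ t_{k-1}(n)`, attained only by the Turán graph `T_{k-1}(n)`. -/
theorem max_RFam_free_orientations (n k : ℕ) (hk : 4 ≤ k) (hkn : k ≤ n)
    (h5 : 5 ≤ n ∨ 5 ≤ k) :
    maxOrient n (RFam k) = 2 ^ turanNum (k - 1) n ∧
    ∀ G : SimpleGraph (Fin n), numOrient G (RFam k) = 2 ^ turanNum (k - 1) n →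
      Nonempty (G ≃g SimpleGraph.turanGraph n (k - 1)) :=
  let ⟨hmax, huniq⟩ := max_RFam_free_orientations_general n k hk
  ⟨hmax, fun G => (huniq G).1⟩
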